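/- Let p₁, p₂ be distinct primes and n₁, n₂, n₃ positive integers with gcd(n₁·p₁, n₂·p₂) = 1, N = n₁·n₂·n₃·p₁·p₂, and define A = n₁p₁n₃·I_{n₂}, B = n₂p₂n₃·I_{n₁}, U = n₁n₂n₃p₁·I_{p₂}, V = n₁n₂n₃p₂·I_{p₁} in ℤ_N. Suppose U′, V′, K₁, K₂ are subsets of ℤ_N such that the pair (S, R) with S = A + B and R = (U + V′ + K₁) ∪ (U′ + V + K₂) is a Vuza canon of ℤ_N. Let A′ = (A \ {a₁, …, a_n}) ∪ {u₁+a₁, …, u_n+a_n}, where a₁, …, a_n are distinct non-zero elements of A and u₁, …, u_n are non-zero elements of U (not necessarily distinct), and let B′ = (B \ {b₁, …, b_m}) ∪ {v₁+b₁, …, v_m+b_m}, where b₁, …, b_m are distinct non-zero elements of B and v₁, …, v_m are non-zero elements of V. If A′ and B′ are non-periodic, then the pair (S′, R) with S′ = A′ + B′ is a Vuza canon of ℤ_N. -/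

import Mathlib

/-!
The sets `A`, `B` are arithmetic progressions `{0, f, …, (n₂-1)f}`, `{0, e, …, (n₁-1)e}` lying in the
cyclic subgroups `G₂ = ⟨f⟩`, `G₁ = ⟨e⟩` of coprime orders `n₂p₂`, `n₁p₁`, so `G₁ ∩ G₂ = 0`; moreover
`U = ⟨n₂f⟩` and `V = ⟨n₁e⟩` are subgroups with `A + U = G₂` and `B + V = G₁`. The elements of `A'`
agree with those of `A` modulo `U`, and those of `B'` with those of `B` modulo `V`.

*Tiling.* Every `r ∈ R` satisfies `r + U ⊆ R` or `r + V ⊆ R`. If `r + U ⊆ R`, then replacing `a` by an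
element of `A'` is harmless. To move `b` by an element of `V`, note that modulo `G₂` the "columns" of `R`
tile a cyclic group by an interval, which forces them to be spaced by exactly `n₁e`: some
`r + n₁e + w` with `w ∈ G₂` again has its `U`-coset inside `R` (`exists_column_step`). The
correction `w` is absorbed by `A' + U = G₂`. The case `r + V ⊆ R` is symmetric. Hence
`A' + B' + R` is the whole group (`perturb_covers`), and since `|A' + B'| ≤ |A||B| = |A + B|`,
counting gives uniqueness of representations (`canon_of_covers`).

*Non-periodicity.* As `A' ⊆ G₂` and `B' ⊆ G₁` lie in independent subgroups, a period of `A' + B'` splits into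
a period of `A'` plus a period of `B'` (`not_isPeriodic_add`).
-/

open Pointwise

/-- `kIa N k a` is the set `{0, k, 2k, …, (a−1)·k}` regarded as a subset of `ZMod N`. -/
def kIa (N k a : ℕ) : Set (ZMod N) := {x | ∃ i < a, x = ((k * i : ℕ) : ZMod N)}

/-- A subset `S` of an additive group is periodic if some nonzero `g` satisfies `g + S = S`. -/
def IsPeriodic {G : Type*} [AddCommGroup G] (S : Set G) : Prop :=
  ∃ g : G, g ≠ 0 ∧ (fun x => g + x) '' S = S

/-- `(S, R)` is a rhythmic canon of `G`: `S`, `R` are nonempty and every `g ∈ G` has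
a unique representation `g = s + r` with `s ∈ S`, `r ∈ R`. -/
def IsRhythmicCanon {G : Type*} [AddCommGroup G] (S R : Set G) : Prop :=
  S.Nonempty ∧ R.Nonempty ∧
    ∀ g : G, ∃! p : G × G, p.1 ∈ S ∧ p.2 ∈ R ∧ p.1 + p.2 = g

/-- A Vuza canon is a rhythmic canon in which neither factor is periodic. -/
def IsVuzaCanon {G : Type*} [AddCommGroup G] (S R : Set G) : Prop :=
  IsRhythmicCanon S R ∧ ¬ IsPeriodic S ∧ ¬ IsPeriodic R

/-- The arithmetic progression `{0, e, 2e, …, (n-1)e}`. -/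
def arithProg {G : Type*} [AddCommGroup G] (e : G) (n : ℕ) : Set G := {x | ∃ i < n, x = i • e}

/-- The elements `r` whose whole translate `r + U` lies in `R`. -/
def cosetCore {G : Type*} [AddCommGroup G] (U : AddSubgroup G) (R : Set G) : Set G :=
  {r | ∀ u ∈ U, r + u ∈ R}

section Abstract

variable {G : Type*} [AddCommGroup G]

lemma IsRhythmicCanon.eq_of_add_eq {S R : Set G} (h : IsRhythmicCanon S R) {s s' r r' : G}
    (hs : s ∈ S) (hs' : s' ∈ S) (hr : r ∈ R) (hr' : r' ∈ R) (he : s + r = s' + r') :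
    s = s' ∧ r = r' := by
  have := (h.2.2 (s' + r')).unique (y₁ := (s, r)) (y₂ := (s', r')) ⟨hs, hr, he⟩ ⟨hs', hr', rfl⟩
  exact Prod.ext_iff.1 this

lemma IsRhythmicCanon.exists_add_eq {S R : Set G} (h : IsRhythmicCanon S R) (g : G) :
    ∃ s ∈ S, ∃ r ∈ R, s + r = g := by
  obtain ⟨p, ⟨h1, h2, h3⟩, -⟩ := h.2.2 g
  exact ⟨p.1, h1, p.2, h2, h3⟩

lemma zero_mem_arithProg (e : G) {n : ℕ} (hn : 0 < n) : (0 : G) ∈ arithProg e n :=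
  ⟨0, hn, by simp⟩

lemma arithProg_subset (e : G) (n : ℕ) : arithProg e n ⊆ AddSubgroup.zmultiples e := by
  rintro x ⟨i, -, rfl⟩
  exact AddSubgroup.nsmul_mem_zmultiples e i

lemma zmultiples_nsmul_le (e : G) (n : ℕ) :
    AddSubgroup.zmultiples (n • e) ≤ AddSubgroup.zmultiples e := by
  rw [AddSubgroup.zmultiples_le]
  exact AddSubgroup.nsmul_mem_zmultiples e n

/-- Division with remainder: the progression of length `n` meets every coset of `⟨n e⟩` in `⟨e⟩`. -/
lemma exists_arithProg_add [Finite G] (e : G) {n : ℕ} (hn : 0 < n) {x : G}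
    (hx : x ∈ AddSubgroup.zmultiples e) :
    ∃ a ∈ arithProg e n, ∃ u ∈ AddSubgroup.zmultiples (n • e), x = a + u := by
  rw [← mem_multiples_iff_mem_zmultiples] at hx
  obtain ⟨k, rfl⟩ := hx
  refine ⟨(k % n) • e, ⟨k % n, Nat.mod_lt _ hn, rfl⟩, (k / n) • (n • e),
    AddSubgroup.nsmul_mem_zmultiples _ _, ?_⟩
  rw [← mul_nsmul', ← add_nsmul]
  change k • e = _
  congr 1
  rw [mul_comm]
  exact (Nat.mod_add_div k n).symm

/-- Elements of two independent subgroups are determined by their sum. -/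
lemma eq_of_add_eq_of_disjoint {G₁ G₂ : AddSubgroup G} (hd : Disjoint G₁ G₂) {a a' b b' : G}
    (ha : a ∈ G₂) (ha' : a' ∈ G₂) (hb : b ∈ G₁) (hb' : b' ∈ G₁) (h : a + b = a' + b') :
    a = a' ∧ b = b' := by
  have h1 : b - b' = a' - a := by
    rw [sub_eq_sub_iff_add_eq_add, add_comm b a, h, add_comm]
  have h0 : b - b' = 0 :=
    AddSubgroup.disjoint_def.1 hd (G₁.sub_mem hb hb') (h1 ▸ G₂.sub_mem ha' ha)
  exact ⟨(sub_eq_zero.1 (h1 ▸ h0)).symm, sub_eq_zero.1 h0⟩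

/-- A tiling by intervals advances by exactly one interval length: a full `U`-coset in `R` at `r` is
followed, up to an error in `G₂`, by a full `U`-coset in `R` at `r + n e`. -/
lemma exists_column_step {e : G} {n : ℕ} {A R : Set G} {G₂ U : AddSubgroup G}
    (hn : 0 < n) (hne : ∀ i, 0 < i → i < n → i • e ≠ 0)
    (hd : Disjoint (AddSubgroup.zmultiples e) G₂) (hA : A ⊆ G₂) (hA0 : (0 : G) ∈ A)
    (hU : U ≤ G₂) (hSR : IsRhythmicCanon (A + arithProg e n) R)
    (hR : ∀ r ∈ R, r ∈ cosetCore U R ∨ r ∈ cosetCore (AddSubgroup.zmultiples (n • e)) R)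
    {r : G} (hr : r ∈ cosetCore U R) :
    ∃ w ∈ G₂, r + n • e + w ∈ cosetCore U R := by
  have hB0 := zero_mem_arithProg e hn
  have h0 : (0 : G) ∈ A + arithProg e n := ⟨0, hA0, 0, hB0, by simp⟩
  by_cases hex : ∃ u ∈ U, ∃ a ∈ A, ∃ b ∈ arithProg e n, ∃ t ∈ cosetCore U R,
      a + b + t = r + u + n • e
  · obtain ⟨u, hu, a, ha, b, ⟨j, hj, rfl⟩, t, ht, heq⟩ := hex
    rcases Nat.eq_zero_or_pos j with rfl | hj0
    · refine ⟨u - a, G₂.sub_mem (hU hu) (hA ha), ?_⟩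
      have : r + n • e + (u - a) = t := by
        rw [zero_nsmul] at heq
        rw [show r + n • e + (u - a) = (r + u + n • e) - a by abel, ← heq]
        abel
      rwa [this]
    · -- an offset `0 < j < n` makes the tiles at `r + u` and at `t` overlap
      exfalso
      have htR : t ∈ R := by simpa using ht 0 U.zero_mem
      have hsplit : n • e = (n - j) • e + j • e := by
        rw [← add_nsmul]
        congr 1
        omega
      have hov : (0 + (n - j) • e) + (r + u) = (a + 0) + t := by
        have : a + t + j • e = (n - j) • e + (r + u) + j • e := by
          rw [show a + t + j • e = a + j • e + t by abel, heq, hsplit]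
          abel
        rw [zero_add, add_zero]
        exact (add_right_cancel this).symm
      have hb' : (n - j) • e ∈ arithProg e n := ⟨n - j, by omega, rfl⟩
      have h1 := (hSR.eq_of_add_eq (Set.add_mem_add hA0 hb') (Set.add_mem_add ha hB0)
        (hr u hu) htR hov).1
      exact hne (n - j) (by omega) (by omega)
        (eq_of_add_eq_of_disjoint hd (hA hA0) (hA ha) (arithProg_subset e n hb')
          (AddSubgroup.zero_mem _) h1).2
  · refine ⟨0, G₂.zero_mem, fun u hu => ?_⟩
    obtain ⟨s, hs, t, ht, heq⟩ := hSR.exists_add_eq (r + u + n • e)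
    obtain ⟨a, ha, b, hb, hab⟩ := id hs
    have hab' : a + b = s := hab
    rcases hR t ht with h | h
    · exact absurd ⟨u, hu, a, ha, b, hb, t, h, by rw [hab', heq]⟩ hex
    · -- translating `t` back by `n e` stays in `R`, and hence gives `r + u`
      have ht' := h (-(n • e)) (AddSubgroup.neg_mem _ (AddSubgroup.mem_zmultiples _))
      have heq' : s + (t + -(n • e)) = 0 + (r + u) := by
        rw [← add_assoc, heq]
        abel
      have h2 := (hSR.eq_of_add_eq hs h0 ht' (hr u hu) heq').2
      have : r + n • e + 0 + u = t := by
        rw [show r + n • e + 0 + u = (r + u) + n • e by abel, ← h2]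
        abel
      rwa [this]

lemma exists_column_translate [Finite G] {e : G} {n : ℕ} {A R : Set G} {G₂ U : AddSubgroup G}
    (hn : 0 < n) (hne : ∀ i, 0 < i → i < n → i • e ≠ 0)
    (hd : Disjoint (AddSubgroup.zmultiples e) G₂) (hA : A ⊆ G₂) (hA0 : (0 : G) ∈ A)
    (hU : U ≤ G₂) (hSR : IsRhythmicCanon (A + arithProg e n) R)
    (hR : ∀ r ∈ R, r ∈ cosetCore U R ∨ r ∈ cosetCore (AddSubgroup.zmultiples (n • e)) R)
    {r : G} (hr : r ∈ cosetCore U R) {v : G} (hv : v ∈ AddSubgroup.zmultiples (n • e)) :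
    ∃ w ∈ G₂, r + v + w ∈ cosetCore U R := by
  rw [← mem_multiples_iff_mem_zmultiples] at hv
  obtain ⟨k, rfl⟩ := hv
  change ∃ w ∈ G₂, r + k • (n • e) + w ∈ cosetCore U R
  induction k with
  | zero => exact ⟨0, G₂.zero_mem, by simpa using hr⟩
  | succ k ih =>
    obtain ⟨w, hw, h⟩ := ih
    obtain ⟨w', hw', h'⟩ := exists_column_step hn hne hd hA hA0 hU hSR hR h
    refine ⟨w + w', G₂.add_mem hw hw', ?_⟩
    rwa [show r + (k + 1) • (n • e) + (w + w') = r + k • (n • e) + w + n • e + w' by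
      rw [succ_nsmul]; abel]

/-- The covering property at elements `a + b + r` with `r + U ⊆ R`; here `φ`, `ψ` are the replacement
maps from `A` to `A'` and from `B` to `B'`. -/
lemma perturb_covers_aux [Finite G] {e f : G} {n m : ℕ} {R : Set G}
    (hn : 0 < n) (hm : 0 < m) (hne : ∀ i, 0 < i → i < n → i • e ≠ 0)
    (hd : Disjoint (AddSubgroup.zmultiples e) (AddSubgroup.zmultiples f))
    (hSR : IsRhythmicCanon (arithProg f m + arithProg e n) R)
    (hR : ∀ r ∈ R, r ∈ cosetCore (AddSubgroup.zmultiples (m • f)) R ∨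
      r ∈ cosetCore (AddSubgroup.zmultiples (n • e)) R)
    {φ ψ : G → G} (hφ : ∀ x, φ x - x ∈ AddSubgroup.zmultiples (m • f))
    (hψ : ∀ x, ψ x - x ∈ AddSubgroup.zmultiples (n • e))
    {a b r : G} (ha : a ∈ arithProg f m) (hb : b ∈ arithProg e n)
    (hr : r ∈ cosetCore (AddSubgroup.zmultiples (m • f)) R) :
    ∃ x ∈ φ '' arithProg f m, ∃ y ∈ ψ '' arithProg e n, ∃ t ∈ R, x + y + t = a + b + r := by
  obtain ⟨w, hw, h⟩ := exists_column_translate hn hne hd (arithProg_subset f m)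
    (zero_mem_arithProg f hm) (zmultiples_nsmul_le f m) hSR hR hr (AddSubgroup.neg_mem _ (hψ b))
  obtain ⟨a₂, ha₂, u, hu, hau⟩ := exists_arithProg_add f hm
    (AddSubgroup.sub_mem _ (arithProg_subset f m ha) hw)
  refine ⟨φ a₂, ⟨a₂, ha₂, rfl⟩, ψ b, ⟨b, hb, rfl⟩, _,
    h (u - (φ a₂ - a₂)) (AddSubgroup.sub_mem _ hu (hφ a₂)), ?_⟩
  rw [sub_eq_iff_eq_add.1 hau]
  abel

lemma perturb_covers [Finite G] {e f : G} {n m : ℕ} {R : Set G}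
    (hn : 0 < n) (hm : 0 < m) (hne : ∀ i, 0 < i → i < n → i • e ≠ 0)
    (hmf : ∀ i, 0 < i → i < m → i • f ≠ 0)
    (hd : Disjoint (AddSubgroup.zmultiples e) (AddSubgroup.zmultiples f))
    (hSR : IsRhythmicCanon (arithProg f m + arithProg e n) R)
    (hR : ∀ r ∈ R, r ∈ cosetCore (AddSubgroup.zmultiples (m • f)) R ∨
      r ∈ cosetCore (AddSubgroup.zmultiples (n • e)) R)
    {φ ψ : G → G} (hφ : ∀ x, φ x - x ∈ AddSubgroup.zmultiples (m • f))
    (hψ : ∀ x, ψ x - x ∈ AddSubgroup.zmultiples (n • e)) (g : G) :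
    ∃ s ∈ φ '' arithProg f m + ψ '' arithProg e n, ∃ t ∈ R, s + t = g := by
  obtain ⟨s, ⟨a, ha, b, hb, rfl⟩, r, hr, rfl⟩ := hSR.exists_add_eq g
  rcases hR r hr with h | h
  · obtain ⟨x, hx, y, hy, t, ht, he⟩ := perturb_covers_aux hn hm hne hd hSR hR hφ hψ ha hb h
    exact ⟨x + y, Set.add_mem_add hx hy, t, ht, he⟩
  · obtain ⟨x, hx, y, hy, t, ht, he⟩ := perturb_covers_aux hm hn hmf hd.symm
      (by rwa [add_comm]) (fun r hr => (hR r hr).symm) hψ hφ hb ha h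
    refine ⟨y + x, Set.add_mem_add hy hx, t, ht, ?_⟩
    rw [add_comm y x, he]
    change b + a + r = a + b + r
    rw [add_comm b a]

/-- In a finite group, a covering pair `(S', R)` with `|S'| ≤ |S|`, where `(S, R)` is a canon,
is itself a canon. -/
lemma canon_of_covers [Finite G] {S S' R : Set G} (h : IsRhythmicCanon S R)
    (hcard : S'.ncard ≤ S.ncard) (hcov : ∀ g, ∃ s ∈ S', ∃ t ∈ R, s + t = g) :
    IsRhythmicCanon S' R := by
  have hinj : Set.InjOn (fun p : G × G => p.1 + p.2) (S ×ˢ R) := by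
    rintro ⟨s, r⟩ ⟨hs, hr⟩ ⟨s', r'⟩ ⟨hs', hr'⟩ he
    exact Prod.ext_iff.2 (h.eq_of_add_eq hs hs' hr hr' he)
  have himg : (fun p : G × G => p.1 + p.2) '' (S ×ˢ R) = Set.univ :=
    Set.eq_univ_of_forall fun g => by
      obtain ⟨s, hs, r, hr, he⟩ := h.exists_add_eq g
      exact ⟨(s, r), ⟨hs, hr⟩, he⟩
  have himg' : (fun p : G × G => p.1 + p.2) '' (S' ×ˢ R) = Set.univ :=
    Set.eq_univ_of_forall fun g => by
      obtain ⟨s, hs, r, hr, he⟩ := hcov g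
      exact ⟨(s, r), ⟨hs, hr⟩, he⟩
  have hle : (S' ×ˢ R).ncard ≤ ((fun p : G × G => p.1 + p.2) '' (S' ×ˢ R)).ncard := by
    rw [himg', ← himg, hinj.ncard_image, Set.ncard_prod, Set.ncard_prod]
    exact Nat.mul_le_mul_right _ hcard
  have hinj' : Set.InjOn (fun p : G × G => p.1 + p.2) (S' ×ˢ R) :=
    Set.injOn_of_ncard_image_eq (le_antisymm (Set.ncard_image_le (Set.toFinite _)) hle)
      (Set.toFinite _)
  obtain ⟨s, hs, -⟩ := hcov 0
  refine ⟨⟨s, hs⟩, h.2.1, fun g => ?_⟩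
  obtain ⟨s, hs, r, hr, he⟩ := hcov g
  refine ⟨(s, r), ⟨hs, hr, he⟩, ?_⟩
  rintro ⟨s', r'⟩ ⟨hs', hr', he'⟩
  exact hinj' ⟨hs', hr'⟩ ⟨hs, hr⟩ (he'.trans he.symm)

lemma ncard_add_of_disjoint {G₁ G₂ : AddSubgroup G} (hd : Disjoint G₁ G₂) {A B : Set G}
    (hA : A ⊆ G₂) (hB : B ⊆ G₁) : (A + B).ncard = A.ncard * B.ncard := by
  rw [← Set.image2_add, ← Set.image_prod, Set.InjOn.ncard_image, Set.ncard_prod]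
  rintro ⟨a, b⟩ ⟨ha, hb⟩ ⟨a', b'⟩ ⟨ha', hb'⟩ he
  exact Prod.ext_iff.2 (eq_of_add_eq_of_disjoint hd (hA ha) (hA ha') (hB hb) (hB hb') he)

lemma isPeriodic_of_forall_mem [Finite G] {S : Set G} {g : G} (hg : g ≠ 0)
    (h : ∀ x ∈ S, g + x ∈ S) : IsPeriodic S := by
  refine ⟨g, hg, Set.eq_of_subset_of_ncard_le (by rintro _ ⟨x, hx, rfl⟩; exact h x hx) ?_
    (Set.toFinite _)⟩
  rw [Set.ncard_image_of_injective _ (add_right_injective g)]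

lemma not_isPeriodic_add [Finite G] {G₁ G₂ : AddSubgroup G} (hd : Disjoint G₁ G₂) {A B : Set G}
    (hA : A ⊆ G₂) (hB : B ⊆ G₁) (hA0 : (0 : G) ∈ A) (hB0 : (0 : G) ∈ B)
    (hAn : ¬ IsPeriodic A) (hBn : ¬ IsPeriodic B) : ¬ IsPeriodic (A + B) := by
  rintro ⟨g, hg, hS⟩
  have hmem : ∀ x ∈ A + B, g + x ∈ A + B := fun x hx => by
    have : g + x ∈ (fun x => g + x) '' (A + B) := ⟨x, hx, rfl⟩
    rwa [hS] at this
  obtain ⟨α, hα, β, hβ, hαβ⟩ := hmem 0 ⟨0, hA0, 0, hB0, by simp⟩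
  have hgs : g = α + β := by simpa using hαβ.symm
  have hα0 : α = 0 := by
    by_contra hne
    refine hAn (isPeriodic_of_forall_mem hne fun x hx => ?_)
    obtain ⟨a, ha, b, hb, he⟩ := hmem x ⟨x, hx, 0, hB0, by simp⟩
    have he' : α + x + β = a + b := by
      rw [show a + b = g + x from he, hgs]
      abel
    rw [(eq_of_add_eq_of_disjoint hd (G₂.add_mem (hA hα) (hA hx)) (hA ha) (hB hβ) (hB hb) he').1]
    exact ha
  have hβ0 : β = 0 := by
    by_contra hne
    refine hBn (isPeriodic_of_forall_mem hne fun x hx => ?_)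
    obtain ⟨a, ha, b, hb, he⟩ := hmem x ⟨0, hA0, x, hx, by simp⟩
    have he' : α + (β + x) = a + b := by
      rw [show a + b = g + x from he, hgs]
      abel
    rw [(eq_of_add_eq_of_disjoint hd (hA hα) (hA ha) (G₁.add_mem (hB hβ) (hB hx)) (hB hb) he').2]
    exact hb
  exact hg (by rw [hgs, hα0, hβ0, add_zero])

/-- The replacement of finitely many non-zero elements of `A` by translates along `U`, written as
the image of `A` under a single map. -/
lemma exists_replacement_map {A A' : Set G} {U : AddSubgroup G} {n : ℕ} {a u : Fin n → G}
    (ha : Function.Injective a) (haA : ∀ i, a i ∈ A ∧ a i ≠ 0) (hu : ∀ i, u i ∈ U)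
    (hA' : A' = (A \ Set.range a) ∪ Set.range (fun i => u i + a i)) :
    ∃ φ : G → G, A' = φ '' A ∧ φ 0 = 0 ∧ ∀ x, φ x - x ∈ U := by
  have h1 : ∀ i, Function.extend a (fun i => u i + a i) id (a i) = u i + a i :=
    fun i => ha.extend_apply _ _ i
  have h2 : ∀ x, x ∉ Set.range a → Function.extend a (fun i => u i + a i) id x = x :=
    fun x hx => Function.extend_apply' _ _ _ hx
  refine ⟨Function.extend a (fun i => u i + a i) id, ?_, ?_, ?_⟩
  · rw [hA']
    ext y
    constructor
    · rintro (⟨hy, hy'⟩ | ⟨i, rfl⟩)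
      · exact ⟨y, hy, h2 y hy'⟩
      · exact ⟨a i, (haA i).1, h1 i⟩
    · rintro ⟨x, hx, rfl⟩
      by_cases hxa : x ∈ Set.range a
      · obtain ⟨i, rfl⟩ := hxa
        exact Or.inr ⟨i, (h1 i).symm⟩
      · rw [h2 x hxa]
        exact Or.inl ⟨hx, hxa⟩
  · exact h2 0 (by rintro ⟨i, hi⟩; exact (haA i).2 hi)
  · intro x
    by_cases hxa : x ∈ Set.range a
    · obtain ⟨i, rfl⟩ := hxa
      rw [h1, add_sub_cancel_right]
      exact hu i
    · rw [h2 x hxa, sub_self]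
      exact U.zero_mem

lemma arithProg_eq_zmultiples [Finite G] {e : G} {p : ℕ} (hp : 0 < p) (h : p • e = 0) :
    arithProg e p = AddSubgroup.zmultiples e := by
  refine subset_antisymm (arithProg_subset e p) fun x hx => ?_
  obtain ⟨a, ha, u, hu, rfl⟩ := exists_arithProg_add e hp hx
  rw [h, AddSubgroup.mem_zmultiples_iff] at hu
  obtain ⟨k, rfl⟩ := hu
  simpa using ha

lemma disjoint_zmultiples_of_coprime {e f : G} {k l : ℕ} (hkl : Nat.Coprime k l)
    (he : k • e = 0) (hf : l • f = 0) :
    Disjoint (AddSubgroup.zmultiples e) (AddSubgroup.zmultiples f) := by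
  rw [AddSubgroup.disjoint_def]
  intro x hx hy
  obtain ⟨i, rfl⟩ := AddSubgroup.mem_zmultiples_iff.1 hx
  obtain ⟨j, hj⟩ := AddSubgroup.mem_zmultiples_iff.1 hy
  have h1 : k • (i • e) = 0 := by rw [smul_comm, he, smul_zero]
  have h2 : l • (i • e) = 0 := by rw [← hj, smul_comm, hf, smul_zero]
  have h3 := Nat.dvd_gcd (addOrderOf_dvd_of_nsmul_eq_zero h1) (addOrderOf_dvd_of_nsmul_eq_zero h2)
  rw [Nat.Coprime] at hkl
  rw [hkl, Nat.dvd_one, AddMonoid.addOrderOf_eq_one_iff] at h3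
  exact h3

end Abstract

lemma kIa_eq_arithProg (N k a : ℕ) : kIa N k a = arithProg (k : ZMod N) a := by
  ext x
  simp only [kIa, arithProg, Set.mem_ofPred_eq, nsmul_eq_mul, Nat.cast_mul, mul_comm]

theorem vuzaCanon_perturb_S (p₁ p₂ n₁ n₂ n₃ N : ℕ)
    (hp₁ : Nat.Prime p₁) (hp₂ : Nat.Prime p₂) (hpne : p₁ ≠ p₂)
    (hn₁ : 0 < n₁) (hn₂ : 0 < n₂) (hn₃ : 0 < n₃)
    (hcop : Nat.gcd (n₁ * p₁) (n₂ * p₂) = 1)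
    (hN : N = n₁ * n₂ * n₃ * p₁ * p₂)
    (A B U V U' V' K₁ K₂ : Set (ZMod N))
    (hA : A = kIa N (n₁ * p₁ * n₃) n₂) (hB : B = kIa N (n₂ * p₂ * n₃) n₁)
    (hU : U = kIa N (n₁ * n₂ * n₃ * p₁) p₂) (hV : V = kIa N (n₁ * n₂ * n₃ * p₂) p₁)
    (S R : Set (ZMod N))
    (hS : S = A + B)
    (hR : R = (U + V' + K₁) ∪ (U' + V + K₂))
    (hSR : IsVuzaCanon S R)
    (A' B' : Set (ZMod N))
    -- A' is obtained from A by replacing distinct non-zero elements a i of A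
    -- by u i + a i, where the u i are non-zero elements of U
    (hA' : ∃ (n : ℕ) (a u : Fin n → ZMod N), Function.Injective a ∧
      (∀ i, a i ∈ A ∧ a i ≠ 0) ∧ (∀ i, u i ∈ U ∧ u i ≠ 0) ∧
      A' = (A \ Set.range a) ∪ Set.range (fun i => u i + a i))
    -- B' is obtained from B by replacing distinct non-zero elements b i of B
    -- by v i + b i, where the v i are non-zero elements of V
    (hB' : ∃ (m : ℕ) (b v : Fin m → ZMod N), Function.Injective b ∧
      (∀ i, b i ∈ B ∧ b i ≠ 0) ∧ (∀ i, v i ∈ V ∧ v i ≠ 0) ∧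
      B' = (B \ Set.range b) ∪ Set.range (fun i => v i + b i))
    (hA'np : ¬ IsPeriodic A') (hB'np : ¬ IsPeriodic B') :
    IsVuzaCanon (A' + B') R := by
  have hp1 := hp₁.pos
  have hp2 := hp₂.pos
  have hNpos : 0 < N := by rw [hN]; positivity
  have : NeZero N := ⟨hNpos.ne'⟩
  set e : ZMod N := ((n₂ * p₂ * n₃ : ℕ) : ZMod N) with he
  set f : ZMod N := ((n₁ * p₁ * n₃ : ℕ) : ZMod N) with hf
  have hsmul : ∀ i k : ℕ, i • ((k : ℕ) : ZMod N) = ((i * k : ℕ) : ZMod N) := fun i k => by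
    rw [nsmul_eq_mul, Nat.cast_mul]
  have he0 : (n₁ * p₁) • e = 0 := by
    rw [he, hsmul, ZMod.natCast_eq_zero_iff, hN]
    exact dvd_of_eq (by ring)
  have hf0 : (n₂ * p₂) • f = 0 := by
    rw [hf, hsmul, ZMod.natCast_eq_zero_iff, hN]
    exact dvd_of_eq (by ring)
  have hd := disjoint_zmultiples_of_coprime hcop he0 hf0
  have hne : ∀ i, 0 < i → i < n₁ → i • e ≠ 0 := by
    intro i hi hin h
    rw [he, hsmul, ZMod.natCast_eq_zero_iff, hN] at h
    have h' : (n₂ * p₂ * n₃) * (n₁ * p₁) ∣ (n₂ * p₂ * n₃) * i := by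
      convert h using 1 <;> ring
    have := Nat.le_of_dvd hi (Nat.dvd_of_mul_dvd_mul_left (by positivity) h')
    nlinarith
  have hmf : ∀ i, 0 < i → i < n₂ → i • f ≠ 0 := by
    intro i hi hin h
    rw [hf, hsmul, ZMod.natCast_eq_zero_iff, hN] at h
    have h' : (n₁ * p₁ * n₃) * (n₂ * p₂) ∣ (n₁ * p₁ * n₃) * i := by
      convert h using 1 <;> ring
    have := Nat.le_of_dvd hi (Nat.dvd_of_mul_dvd_mul_left (by positivity) h')
    nlinarith
  rw [kIa_eq_arithProg] at hA hB hU hV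
  have hU' : U = AddSubgroup.zmultiples (n₂ • f) := by
    rw [hU, show ((n₁ * n₂ * n₃ * p₁ : ℕ) : ZMod N) = n₂ • f by rw [hf, hsmul]; congr 1; ring]
    exact arithProg_eq_zmultiples hp2 (by rw [← mul_nsmul, hf0])
  have hV' : V = AddSubgroup.zmultiples (n₁ • e) := by
    rw [hV, show ((n₁ * n₂ * n₃ * p₂ : ℕ) : ZMod N) = n₁ • e by rw [he, hsmul]; congr 1; ring]
    exact arithProg_eq_zmultiples hp1 (by rw [← mul_nsmul, he0])
  have hRcore : ∀ r ∈ R, r ∈ cosetCore (AddSubgroup.zmultiples (n₂ • f)) R ∨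
      r ∈ cosetCore (AddSubgroup.zmultiples (n₁ • e)) R := by
    intro r hr
    rw [hR] at hr
    rcases hr with ⟨_, ⟨x, hx, y, hy, rfl⟩, z, hz, rfl⟩ | ⟨_, ⟨x, hx, y, hy, rfl⟩, z, hz, rfl⟩
    · refine Or.inl fun u hu => ?_
      rw [hR]
      refine Or.inl ⟨x + u + y, ⟨x + u, ?_, y, hy, rfl⟩, z, hz, ?_⟩
      · rw [hU'] at hx ⊢
        exact AddSubgroup.add_mem _ hx hu
      · change x + u + y + z = x + y + z + u
        abel
    · refine Or.inr fun v hv => ?_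
      rw [hR]
      refine Or.inr ⟨x + (y + v), ⟨x, hx, y + v, ?_, rfl⟩, z, hz, ?_⟩
      · rw [hV'] at hy ⊢
        exact AddSubgroup.add_mem _ hy hv
      · change x + (y + v) + z = x + y + z + v
        abel
  obtain ⟨n, a, u, hainj, ha, hu, hA'⟩ := hA'
  obtain ⟨m, b, v, hbinj, hb, hv, hB'⟩ := hB'
  obtain ⟨φ, hφA, hφ0, hφ⟩ := exists_replacement_map (U := AddSubgroup.zmultiples (n₂ • f))
    hainj ha (fun i => by have := (hu i).1; rwa [hU'] at this) hA'
  obtain ⟨ψ, hψB, hψ0, hψ⟩ := exists_replacement_map (U := AddSubgroup.zmultiples (n₁ • e))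
    hbinj hb (fun i => by have := (hv i).1; rwa [hV'] at this) hB'
  obtain ⟨hcanon, -, hRnp⟩ := hSR
  have hAsub : A ⊆ AddSubgroup.zmultiples f := hA ▸ arithProg_subset f n₂
  have hBsub : B ⊆ AddSubgroup.zmultiples e := hB ▸ arithProg_subset e n₁
  have hA'sub : A' ⊆ AddSubgroup.zmultiples f := by
    rw [hφA]
    rintro _ ⟨x, hx, rfl⟩
    rw [← sub_add_cancel (φ x) x]
    exact AddSubgroup.add_mem _ (zmultiples_nsmul_le f n₂ (hφ x)) (hAsub hx)
  have hB'sub : B' ⊆ AddSubgroup.zmultiples e := by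
    rw [hψB]
    rintro _ ⟨x, hx, rfl⟩
    rw [← sub_add_cancel (ψ x) x]
    exact AddSubgroup.add_mem _ (zmultiples_nsmul_le e n₁ (hψ x)) (hBsub hx)
  refine ⟨canon_of_covers hcanon ?_ ?_, ?_, hRnp⟩
  · rw [hS, ncard_add_of_disjoint hd hA'sub hB'sub, ncard_add_of_disjoint hd hAsub hBsub, hφA, hψB]
    exact Nat.mul_le_mul (Set.ncard_image_le (Set.toFinite _)) (Set.ncard_image_le (Set.toFinite _))
  · rw [hS, hA, hB] at hcanon
    rw [hφA, hψB, hA, hB]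
    exact perturb_covers hn₁ hn₂ hne hmf hd hcanon hRcore hφ hψ
  · refine not_isPeriodic_add hd hA'sub hB'sub ?_ ?_ hA'np hB'np
    · rw [hφA]
      exact ⟨0, hA ▸ zero_mem_arithProg f hn₂, hφ0⟩
    · rw [hψB]
      exact ⟨0, hB ▸ zero_mem_arithProg e hn₁, hψ0⟩
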